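/- If ρ ∈ H¹((0,1); L²(𝕋^d)) is periodic in time (ρ(·,0) = ρ(·,1)) and satisfies ∂_s ρ(ξ,s) − (A(s)ρ(·,s))(ξ) = 0 for almost every (ξ,s) ∈ 𝕋^d × (0,1), then ρ is constant almost everywhere on 𝕋^{d+1}. -/

import Mathlib

open MeasureTheory

noncomputable section

/-- The periodicity cell `[0,1)^d`, identified with the torus `𝕋^d`. -/
def cube (d : ℕ) : Set (Fin d → ℝ) := Set.univ.pi fun _ => Set.Ico (0 : ℝ) 1

/-- The operator `A(s)` applied pointwise. -/
def Aop {d : ℕ} (a : (Fin d → ℝ) → ℝ) (μ : (Fin d → ℝ) → (Fin d → ℝ) → ℝ → ℝ)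
    (s : ℝ) (v : (Fin d → ℝ) → ℝ) (ξ : Fin d → ℝ) : ℝ :=
  ∫ η, a (ξ - η) * μ ξ η s * (v η - v ξ)

/-! ### Helper lemmas -/

theorem aux_time (g u : ℝ → ℝ) (hg : IntegrableOn g (Set.Ioo 0 1))
    (hu : ∀ s ∈ Set.Icc (0 : ℝ) 1, u s = u 0 + ∫ τ in (0 : ℝ)..s, g τ) (hper : u 1 = u 0) :
    ∫ s in Set.Ioo (0 : ℝ) 1, u s * g s = 0 := by
  have hgi : IntervalIntegrable g volume 0 1 := by
    rw [intervalIntegrable_iff_integrableOn_Ioo_of_le zero_le_one]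
    exact hg
  set w : ℝ → ℝ := fun s => ∫ τ in (0 : ℝ)..s, g τ with hw
  have hac : AbsolutelyContinuousOnInterval w 0 1 :=
    hgi.absolutelyContinuousOnInterval_intervalIntegral (by simp)
  have hw1 : w 1 = 0 := by
    have := hu 1 (by simp)
    simp only [hw]; linarith
  have hw0 : w 0 = 0 := by simp [hw]
  have hder : ∀ᵐ x, x ∈ Set.uIcc (0:ℝ) 1 → deriv w x = g x := by
    filter_upwards [hgi.ae_hasDerivAt_integral] with x hx hx1
    exact (hx hx1 0 (by simp)).deriv
  have key := hac.integral_deriv_mul_eq_sub hac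
  rw [hw1, hw0] at key
  have key2 : ∫ x in (0:ℝ)..1, (2 * (w x * g x)) = 0 := by
    refine Eq.trans ?_ (key.trans (by ring))
    apply intervalIntegral.integral_congr_ae
    filter_upwards [hder] with x hx hx1
    rw [hx (Set.uIoc_subset_uIcc hx1)]
    ring
  rw [intervalIntegral.integral_const_mul] at key2
  have hwg : IntervalIntegrable (fun x => w x * g x) volume 0 1 :=
    hgi.continuousOn_mul hac.continuousOn
  rw [← integral_Ioc_eq_integral_Ioo, ← intervalIntegral.integral_of_le zero_le_one]
  have : ∫ s in (0:ℝ)..1, u s * g s = ∫ s in (0:ℝ)..1, (u 0 * g s + w s * g s) := by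
    apply intervalIntegral.integral_congr
    intro x hx
    rw [Set.uIcc_of_le zero_le_one] at hx
    simp only
    rw [hu x hx]
    ring
  rw [this, intervalIntegral.integral_add (hgi.const_mul _) hwg,
    intervalIntegral.integral_const_mul]
  have : ∫ s in (0:ℝ)..1, g s = 0 := hw1
  rw [this]; linarith

/-- The integer lattice. -/
abbrev latt (d : ℕ) : AddSubgroup (Fin d → ℝ) :=
  (Submodule.span ℤ (Set.range (Pi.basisFun ℝ (Fin d)))).toAddSubgroup

theorem latt_mem {d : ℕ} (g : latt d) : ∃ k : Fin d → ℤ, (g : Fin d → ℝ) = fun i => (k i : ℝ) := by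
  have := ((Pi.basisFun ℝ (Fin d)).mem_span_iff_repr_mem ℤ (g : Fin d → ℝ)).1 g.2
  choose k hk using this
  refine ⟨k, funext fun i => ?_⟩
  have := hk i
  simp at this
  exact this.symm

instance latt_countable (d : ℕ) : Countable (latt d) := by
  choose k hk using fun g : latt d => latt_mem g
  refine Function.Injective.countable (f := k) fun g g' h => ?_
  apply Subtype.ext
  rw [hk g, hk g', h]

theorem cube_fund (d : ℕ) : IsAddFundamentalDomain (latt d) (cube d) volume := by
  have := ZSpan.isAddFundamentalDomain' (Pi.basisFun ℝ (Fin d)) volume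
  rwa [ZSpan.fundamentalDomain_pi_basisFun] at this

theorem latt_inv {d : ℕ} {β : Type*} {f : (Fin d → ℝ) → β}
    (hf : ∀ ξ, ∀ k : Fin d → ℤ, f (ξ + fun i => (k i : ℝ)) = f ξ) (g : latt d) (x : Fin d → ℝ) :
    f (g +ᵥ x) = f x := by
  obtain ⟨k, hk⟩ := latt_mem g
  rw [AddSubgroup.vadd_def, hk, vadd_eq_add, add_comm, hf]

theorem cube_meas (d : ℕ) : MeasurableSet (cube d) :=
  MeasurableSet.univ_pi fun _ => measurableSet_Ico

open scoped Pointwise in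
theorem cube_shift {d : ℕ} (f : (Fin d → ℝ) → ENNReal)
    (hf : ∀ ξ, ∀ k : Fin d → ℤ, f (ξ + fun i => (k i : ℝ)) = f ξ) (z : Fin d → ℝ) :
    ∫⁻ ξ in cube d, f (ξ - z) = ∫⁻ ξ in cube d, f ξ := by
  have h1 := cube_fund d
  have h2 : IsAddFundamentalDomain (latt d) ((-z) +ᵥ cube d) volume := h1.vadd_of_comm (-z)
  rw [h1.setLIntegral_eq h2 f (latt_inv hf)]
  have hmp : MeasurePreserving (fun ξ : Fin d → ℝ => ξ - z) volume volume :=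
    measurePreserving_sub_right volume z
  have hme : MeasurableEmbedding (fun ξ : Fin d → ℝ => ξ - z) :=
    (MeasurableEquiv.subRight z).measurableEmbedding
  rw [← hmp.setLIntegral_comp_preimage_emb hme f]
  congr 2
  ext x
  simp [Set.mem_vadd_set_iff_neg_vadd_mem]

open scoped Pointwise in
theorem cube_ae {d : ℕ} (p : (Fin d → ℝ) → Prop)
    (hp : ∀ ξ, ∀ k : Fin d → ℤ, p (ξ + fun i => (k i : ℝ)) = p ξ)
    (h : ∀ᵐ ξ ∂(volume.restrict (cube d)), p ξ) : ∀ᵐ ξ, p ξ := by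
  rw [ae_iff]
  apply (cube_fund d).measure_zero_of_invariant
  · intro g
    ext x
    rw [Set.mem_vadd_set_iff_neg_vadd_mem]
    simp only [Set.mem_ofPred_eq]
    rw [latt_inv hp]
  · rw [ae_restrict_iff' (cube_meas d), ae_iff] at h
    convert h using 2
    ext x
    simp [and_comm]

/-- Measure on space-time cell. -/
def PM (d : ℕ) : Measure ((Fin d → ℝ) × ℝ) :=
  (volume.restrict (cube d)).prod (volume.restrict (Set.Ioo (0 : ℝ) 1))

instance (d : ℕ) : IsFiniteMeasure (volume.restrict (cube d)) := by
  refine ⟨?_⟩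
  rw [Measure.restrict_apply_univ, cube, volume_pi_pi]
  simp

instance (d : ℕ) : IsFiniteMeasure (PM d) := by
  unfold PM; infer_instance

theorem PM_eq (d : ℕ) : PM d = volume.restrict (cube d ×ˢ Set.Ioo (0 : ℝ) 1) := by
  rw [PM, Measure.prod_restrict]; rfl

/-- The involution. -/
def invol {d : ℕ} (q : ((Fin d → ℝ) × ℝ) × (Fin d → ℝ)) : ((Fin d → ℝ) × ℝ) × (Fin d → ℝ) :=
  ((q.1.1 - q.2, q.1.2), -q.2)

theorem invol_meas {d : ℕ} : Measurable (invol (d := d)) := by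
  unfold invol; fun_prop

theorem invol_lintegral {d : ℕ} (F : ((Fin d → ℝ) × ℝ) × (Fin d → ℝ) → ENNReal) (hF : Measurable F)
    (hper : ∀ ξ s z, ∀ k : Fin d → ℤ, F ((ξ + fun i => (k i : ℝ), s), z) = F ((ξ, s), z)) :
    ∫⁻ q, F (invol q) ∂((PM d).prod volume) = ∫⁻ q, F q ∂((PM d).prod volume) := by
  rw [lintegral_prod_symm' (fun q => F (invol q)) (hF.comp invol_meas), lintegral_prod_symm' _ hF]
  have : ∀ z : Fin d → ℝ, ∫⁻ p, F (invol (p, z)) ∂(PM d) = ∫⁻ p, F (p, -z) ∂(PM d) := by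
    intro z
    have m1 : Measurable fun p : (Fin d → ℝ) × ℝ => F (invol (p, z)) := by
      have := hF.comp invol_meas
      exact this.comp (by fun_prop : Measurable fun p : (Fin d → ℝ) × ℝ => (p, z))
    have m2 : Measurable fun p : (Fin d → ℝ) × ℝ => F (p, -z) := by
      fun_prop
    rw [PM, lintegral_prod_symm' _ m1, lintegral_prod_symm' _ m2]
    congr 1; ext s
    exact cube_shift (fun ξ => F ((ξ, s), -z)) (fun ξ k => hper ξ s (-z) k) z
  simp_rw [this]
  exact lintegral_neg_eq_self (μ := volume) (fun z => ∫⁻ p, F (p, z) ∂(PM d))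

theorem invol_integrable {d : ℕ} (F : ((Fin d → ℝ) × ℝ) × (Fin d → ℝ) → ℝ) (hF : Measurable F)
    (hper : ∀ ξ s z, ∀ k : Fin d → ℤ, F ((ξ + fun i => (k i : ℝ), s), z) = F ((ξ, s), z))
    (hI : Integrable F ((PM d).prod volume)) :
    Integrable (fun q => F (invol q)) ((PM d).prod volume) := by
  refine ⟨(hF.comp invol_meas).aestronglyMeasurable, ?_⟩
  have := hI.2
  unfold HasFiniteIntegral at *
  rw [invol_lintegral (fun q => ‖F q‖ₑ) hF.enorm]
  · exact this
  · intro ξ s z k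
    simp only [hper]

theorem invol_integral {d : ℕ} (F : ((Fin d → ℝ) × ℝ) × (Fin d → ℝ) → ℝ) (hF : Measurable F)
    (hper : ∀ ξ s z, ∀ k : Fin d → ℤ, F ((ξ + fun i => (k i : ℝ), s), z) = F ((ξ, s), z))
    (hI : Integrable F ((PM d).prod volume)) :
    ∫ q, F (invol q) ∂((PM d).prod volume) = ∫ q, F q ∂((PM d).prod volume) := by
  rw [integral_eq_lintegral_pos_part_sub_lintegral_neg_part (invol_integrable F hF hper hI),
    integral_eq_lintegral_pos_part_sub_lintegral_neg_part hI,
    invol_lintegral (fun q => ENNReal.ofReal (F q)) hF.ennreal_ofReal,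
    invol_lintegral (fun q => ENNReal.ofReal (-F q)) hF.neg.ennreal_ofReal]
  all_goals
    intro ξ s z k
    simp only [hper]

theorem ergodic {d : ℕ} (a : (Fin d → ℝ) → ℝ) (hameas : Measurable a)
    (hamass : ∫ z, a z = 1) (v : (Fin d → ℝ) → ℝ) (hv : Measurable v)
    (h : ∀ᵐ z, a z ≠ 0 → ∀ᵐ ξ, v (ξ - z) = v ξ) : ∃ c, ∀ᵐ ξ, v ξ = c := by
  have comp : ∀ (z : Fin d → ℝ) (p : (Fin d → ℝ) → Prop), (∀ᵐ ξ, p ξ) → ∀ᵐ ξ, p (ξ - z) :=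
    fun z p hp => (measurePreserving_sub_right volume z).quasiMeasurePreserving.ae hp
  let G : AddSubgroup (Fin d → ℝ) :=
    { carrier := {z | ∀ᵐ ξ, v (ξ - z) = v ξ}
      zero_mem' := by simp
      add_mem' := by
        intro x y hx hy
        change ∀ᵐ ξ, v (ξ - (x + y)) = v ξ
        filter_upwards [comp x _ hy, hx] with ξ h1 h2
        rw [← h2, ← h1, sub_sub]
      neg_mem' := by
        intro x hx
        change ∀ᵐ ξ, v (ξ - (-x)) = v ξ
        filter_upwards [comp (-x) _ hx] with ξ h1
        rw [← h1]; simp }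
  obtain ⟨N, hNs, hNm, hN0⟩ := exists_measurable_superset_of_null (ae_iff.1 h)
  have hS : MeasurableSet {z | a z ≠ 0} := (hameas (measurableSet_singleton 0)).compl
  have hSpos : volume ({z | a z ≠ 0} \ N) ≠ 0 := by
    rw [measure_sdiff_null hN0]
    intro h0
    have : a =ᵐ[volume] 0 := by
      rw [Filter.EventuallyEq, ae_iff]; exact h0
    rw [integral_congr_ae this] at hamass
    simp at hamass
  have hnh := Measure.sub_mem_nhds_zero_of_addHaar_pos volume ({z | a z ≠ 0} \ N) (hS.diff hNm)
    (pos_iff_ne_zero.2 hSpos)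
  have hsub : ({z | a z ≠ 0} \ N) ⊆ (G : Set (Fin d → ℝ)) := by
    intro z hz
    by_contra hc
    apply hz.2
    apply hNs
    intro hh
    exact hc (hh hz.1)
  have hGn : (G : Set (Fin d → ℝ)) ∈ nhds 0 := by
    refine Filter.mem_of_superset hnh ?_
    rintro _ ⟨x, hx, y, hy, rfl⟩
    exact G.sub_mem (hsub hx) (hsub hy)
  have hGo := AddSubgroup.isOpen_of_mem_nhds G hGn
  have hGc := AddSubgroup.isClosed_of_isOpen G hGo
  have hGu : (G : Set (Fin d → ℝ)) = Set.univ :=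
    IsClopen.eq_univ ⟨hGc, hGo⟩ ⟨0, G.zero_mem⟩
  have hall : ∀ z, ∀ᵐ ξ, v (ξ - z) = v ξ := by
    intro z
    have : z ∈ (G : Set (Fin d → ℝ)) := by rw [hGu]; trivial
    exact this
  have hms : MeasurableSet {p : (Fin d → ℝ) × (Fin d → ℝ) | v (p.2 - p.1) = v p.2} :=
    measurableSet_eq_fun (by fun_prop) (by fun_prop)
  have h2 : ∀ᵐ p : (Fin d → ℝ) × (Fin d → ℝ) ∂(volume.prod volume), v (p.2 - p.1) = v p.2 :=
    (Measure.ae_prod_iff_ae_ae hms).2 (Filter.Eventually.of_forall hall)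
  have h3 : ∀ᵐ p : (Fin d → ℝ) × (Fin d → ℝ) ∂(volume.prod volume), v (p.1 - p.2) = v p.1 :=
    Measure.measurePreserving_swap.quasiMeasurePreserving.ae h2
  obtain ⟨ξ, hξ⟩ := (Measure.ae_ae_of_ae_prod h3).exists
  refine ⟨v ξ, ?_⟩
  have := (Measure.measurePreserving_sub_left volume ξ).quasiMeasurePreserving.ae hξ
  filter_upwards [this] with x hx
  rw [← hx]; simp

/-- If `ρ ∈ H¹((0,1); L²(𝕋^d))` is time-periodic and solves `∂_s ρ - A(s)ρ = 0`
(in the equivalent integrated-in-time form), then `ρ` is constant a.e. on `𝕋^{d+1}`. -/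
theorem stmt7 {d : ℕ} (hd : 1 ≤ d)
    (a : (Fin d → ℝ) → ℝ) (μ : (Fin d → ℝ) → (Fin d → ℝ) → ℝ → ℝ) (μm μp : ℝ)
    (hameas : Measurable a) (hanonneg : ∀ z, 0 ≤ a z)
    (haint : Integrable a) (hamass : ∫ z, a z = 1)
    (hamom : Integrable (fun z => ‖z‖ ^ 2 * a z))
    (hasymm : ∀ z, a (-z) = a z)
    (hμmeas : Measurable fun p : (Fin d → ℝ) × (Fin d → ℝ) × ℝ => μ p.1 p.2.1 p.2.2)
    (hμper₁ : ∀ ξ η s, ∀ k : Fin d → ℤ, μ (ξ + fun i => (k i : ℝ)) η s = μ ξ η s)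
    (hμper₂ : ∀ ξ η s, ∀ k : Fin d → ℤ, μ ξ (η + fun i => (k i : ℝ)) s = μ ξ η s)
    (hμper₃ : ∀ ξ η s, μ ξ η (s + 1) = μ ξ η s)
    (hμsymm : ∀ ξ η s, μ ξ η s = μ η ξ s)
    (hμm : 0 < μm) (hμlb : ∀ ξ η s, μm ≤ μ ξ η s) (hμub : ∀ ξ η s, μ ξ η s ≤ μp)
    (ρ : (Fin d → ℝ) → ℝ → ℝ)
    (hρmeas : Measurable fun p : (Fin d → ℝ) × ℝ => ρ p.1 p.2)
    (hρper₁ : ∀ ξ s, ∀ k : Fin d → ℤ, ρ (ξ + fun i => (k i : ℝ)) s = ρ ξ s)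
    (hρper₂ : ∀ ξ s, ρ ξ (s + 1) = ρ ξ s)
    (hρL2 : IntegrableOn (fun p : (Fin d → ℝ) × ℝ => (ρ p.1 p.2) ^ 2)
      (cube d ×ˢ Set.Ioo (0 : ℝ) 1))
    (hρeq : ∀ᵐ ξ ∂(volume : Measure (Fin d → ℝ)), ∀ s ∈ Set.Icc (0 : ℝ) 1,
      ρ ξ s = ρ ξ 0 + ∫ τ in (0 : ℝ)..s, Aop a μ τ (fun η => ρ η τ) ξ) :
    ∃ c : ℝ, ∀ᵐ p ∂(volume.restrict (cube d ×ˢ Set.Ioo (0 : ℝ) 1)),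
      ρ (Prod.fst p) (Prod.snd p) = c := by
  classical
  have hμ0 : ∀ ξ η s, 0 ≤ μ ξ η s := fun ξ η s => hμm.le.trans (hμlb ξ η s)
  have hμp : 0 ≤ μp := (hμ0 0 0 0).trans (hμub 0 0 0)
  have hρS : Integrable (fun p : (Fin d → ℝ) × ℝ => (ρ p.1 p.2) ^ 2) (PM d) := by
    rw [PM_eq]; exact hρL2
  let R : ((Fin d → ℝ) × ℝ) × (Fin d → ℝ) → ℝ := fun q => ρ q.1.1 q.1.2
  let R' : ((Fin d → ℝ) × ℝ) × (Fin d → ℝ) → ℝ := fun q => ρ (q.1.1 - q.2) q.1.2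
  let W : ((Fin d → ℝ) × ℝ) × (Fin d → ℝ) → ℝ := fun q => a q.2 * μ q.1.1 (q.1.1 - q.2) q.1.2
  have mR : Measurable R := hρmeas.comp measurable_fst
  have mR' : Measurable R' :=
    hρmeas.comp (by fun_prop : Measurable fun q : ((Fin d → ℝ) × ℝ) × (Fin d → ℝ) =>
      (q.1.1 - q.2, q.1.2))
  have mA : Measurable fun q : ((Fin d → ℝ) × ℝ) × (Fin d → ℝ) => a q.2 :=
    hameas.comp measurable_snd
  have mW : Measurable W :=
    mA.mul (hμmeas.comp (by fun_prop : Measurable fun q : ((Fin d → ℝ) × ℝ) × (Fin d → ℝ) =>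
      (q.1.1, q.1.1 - q.2, q.1.2)))
  have hW0 : ∀ q, 0 ≤ W q := fun q => mul_nonneg (hanonneg _) (hμ0 _ _ _)
  have hWp : ∀ q, W q ≤ μp * a q.2 := fun q => by
    have := mul_le_mul_of_nonneg_left (hμub q.1.1 (q.1.1 - q.2) q.1.2) (hanonneg q.2)
    simp only [W]; linarith
  have I0 : Integrable (fun q : ((Fin d → ℝ) × ℝ) × (Fin d → ℝ) => a q.2)
      ((PM d).prod volume) := by
    have := (integrable_const (μ := PM d) (1 : ℝ)).mul_prod haint
    simpa using this
  have I1 : Integrable (fun q => a q.2 * R q ^ 2) ((PM d).prod volume) := by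
    have := hρS.mul_prod haint
    refine this.congr (Filter.Eventually.of_forall fun q => ?_)
    simp only [R]; ring
  have I2 : Integrable (fun q => a q.2 * R' q ^ 2) ((PM d).prod volume) := by
    have := invol_integrable (fun q => a q.2 * R q ^ 2) (mA.mul (mR.pow_const 2))
      (fun ξ s z k => by simp only [R, hρper₁]) I1
    refine this.congr (Filter.Eventually.of_forall fun q => ?_)
    simp only [R, R', invol, hasymm]
  have shiftc : ∀ (ξ z : Fin d → ℝ) (k : Fin d → ℤ),
      (ξ + fun i => (k i : ℝ)) - z = (ξ - z) + fun i => (k i : ℝ) := by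
    intro ξ z k; abel
  have IG : Integrable (fun q => W q * (R' q - R q)) ((PM d).prod volume) := by
    refine (((I0.add I1).add I2).const_mul μp).mono'
      (mW.mul (mR'.sub mR)).aestronglyMeasurable (Filter.Eventually.of_forall fun q => ?_)
    rw [Real.norm_eq_abs, abs_mul, abs_of_nonneg (hW0 q)]
    have h1 : |R' q - R q| ≤ 1 + R q ^ 2 + R' q ^ 2 := by
      rw [abs_le]
      constructor <;> nlinarith [sq_nonneg (R q - 1), sq_nonneg (R q + 1), sq_nonneg (R' q - 1),
        sq_nonneg (R' q + 1)]
    calc W q * |R' q - R q| ≤ (μp * a q.2) * (1 + R q ^ 2 + R' q ^ 2) :=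
          mul_le_mul (hWp q) h1 (abs_nonneg _) (mul_nonneg hμp (hanonneg _))
      _ = _ := by simp only [Pi.add_apply]; ring
  let F : ((Fin d → ℝ) × ℝ) × (Fin d → ℝ) → ℝ := fun q => W q * (R' q - R q) * R q
  have mF : Measurable F := (mW.mul (mR'.sub mR)).mul mR
  have IF : Integrable F ((PM d).prod volume) := by
    refine (((I1.const_mul 2).add I2).const_mul μp).mono'
      mF.aestronglyMeasurable (Filter.Eventually.of_forall fun q => ?_)
    simp only [F]
    rw [mul_assoc, Real.norm_eq_abs, abs_mul, abs_of_nonneg (hW0 q)]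
    have h1 : |(R' q - R q) * R q| ≤ 2 * R q ^ 2 + R' q ^ 2 := by
      rw [abs_le]
      constructor <;> nlinarith [sq_nonneg (R q - R' q), sq_nonneg (R q + R' q), sq_nonneg (R q),
        sq_nonneg (R' q)]
    calc W q * |(R' q - R q) * R q| ≤ (μp * a q.2) * (2 * R q ^ 2 + R' q ^ 2) :=
          mul_le_mul (hWp q) h1 (abs_nonneg _) (mul_nonneg hμp (hanonneg _))
      _ = _ := by simp only [Pi.add_apply]; ring
  have hFper : ∀ ξ s z, ∀ k : Fin d → ℤ, F ((ξ + fun i => (k i : ℝ), s), z) = F ((ξ, s), z) := by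
    intro ξ s z k
    simp only [F, W, R, R', shiftc, hρper₁, hμper₁, hμper₂]
  have hAop : ∀ p : (Fin d → ℝ) × ℝ, Aop a μ p.2 (fun η => ρ η p.2) p.1
      = ∫ z, W (p, z) * (R' (p, z) - R (p, z)) := by
    intro p
    rw [Aop, ← integral_sub_left_eq_self _ volume p.1]
    simp only [W, R, R', sub_sub_cancel]
  have Ig : Integrable (fun p : (Fin d → ℝ) × ℝ => Aop a μ p.2 (fun η => ρ η p.2) p.1) (PM d) := by
    simp_rw [hAop]
    exact IG.integral_prod_left
  have hρg : ∀ p : (Fin d → ℝ) × ℝ, ρ p.1 p.2 * Aop a μ p.2 (fun η => ρ η p.2) p.1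
      = ∫ z, F (p, z) := by
    intro p
    rw [hAop, ← integral_const_mul]
    refine integral_congr_ae (Filter.Eventually.of_forall fun z => ?_)
    simp only [F, R]; ring
  have Iρg : Integrable (fun p : (Fin d → ℝ) × ℝ =>
      ρ p.1 p.2 * Aop a μ p.2 (fun η => ρ η p.2) p.1) (PM d) := by
    simp_rw [hρg]
    exact IF.integral_prod_left
  have hρeq' := ae_restrict_of_ae (s := cube d) hρeq
  have hT : ∫ q, F q ∂((PM d).prod volume) = 0 := by
    rw [integral_prod _ IF]
    simp_rw [← hρg]
    rw [PM] at Iρg Ig ⊢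
    rw [integral_prod _ Iρg]
    refine integral_eq_zero_of_ae ?_
    filter_upwards [hρeq', Ig.prod_right_ae] with ξ h1 h2
    have hp : ρ ξ 1 = ρ ξ 0 := by simpa using hρper₂ ξ 0
    exact aux_time (fun τ => Aop a μ τ (fun η => ρ η τ) ξ) (ρ ξ) h2 h1 hp
  have hT' := invol_integral F mF hFper IF
  have IF' := invol_integrable F mF hFper IF
  have hsum : ∀ q, W q * (R' q - R q) ^ 2 = -(F q + F (invol q)) := by
    intro q
    simp only [F, W, R, R', invol, hasymm, sub_neg_eq_add, sub_add_cancel,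
      hμsymm (q.1.1 - q.2) q.1.1]
    ring
  have hD : ∫ q, W q * (R' q - R q) ^ 2 ∂((PM d).prod volume) = 0 := by
    simp_rw [hsum]
    rw [integral_neg, integral_add IF IF', hT', hT]; simp
  have hD0 : ∀ᵐ q ∂((PM d).prod volume), W q * (R' q - R q) ^ 2 = 0 := by
    have ID : Integrable (fun q => W q * (R' q - R q) ^ 2) ((PM d).prod volume) := by
      simp_rw [hsum]; exact (IF.add IF').neg
    exact (integral_eq_zero_iff_of_nonneg (fun q => mul_nonneg (hW0 q) (sq_nonneg _)) ID).1 hD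
  -- the generator vanishes
  have hA0 : ∀ᵐ p ∂(PM d), Aop a μ p.2 (fun η => ρ η p.2) p.1 = 0 := by
    filter_upwards [Measure.ae_ae_of_ae_prod hD0] with p hp
    rw [hAop]
    refine integral_eq_zero_of_ae ?_
    filter_upwards [hp] with z hz
    rcases mul_eq_zero.1 hz with h | h
    · simp [h]
    · simp [pow_eq_zero_iff] at h
      simp [h]
  have hconst : ∀ᵐ ξ ∂(volume.restrict (cube d)), ∀ s ∈ Set.Icc (0 : ℝ) 1, ρ ξ s = ρ ξ 0 := by
    rw [PM] at hA0
    filter_upwards [hρeq', Measure.ae_ae_of_ae_prod hA0] with ξ h1 h2 s hs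
    rw [h1 s hs]
    have : ∫ τ in (0 : ℝ)..s, Aop a μ τ (fun η => ρ η τ) ξ = 0 := by
      rw [intervalIntegral.integral_of_le hs.1, integral_Ioc_eq_integral_Ioo]
      refine integral_eq_zero_of_ae ?_
      exact ae_restrict_of_ae_restrict_of_subset (Set.Ioo_subset_Ioo_right hs.2) h2
    rw [this, add_zero]
  -- choose a good time
  have hgood : ∃ s ∈ Set.Ioo (0 : ℝ) 1, ∀ᵐ z, a z ≠ 0 →
      ∀ᵐ ξ ∂(volume.restrict (cube d)), ρ (ξ - z) s = ρ ξ s := by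
    have hmB : MeasurableSet {q : ((Fin d → ℝ) × ℝ) × (Fin d → ℝ) | W q * (R' q - R q) ^ 2 = 0} :=
      measurableSet_eq_fun (mW.mul ((mR'.sub mR).pow_const 2)) measurable_const
    have h1 : ∀ᵐ p ∂(PM d), ∀ᵐ z, W (p, z) * (R' (p, z) - R (p, z)) ^ 2 = 0 :=
      Measure.ae_ae_of_ae_prod hD0
    have h2 : ∀ᵐ z, ∀ᵐ p ∂(PM d), W (p, z) * (R' (p, z) - R (p, z)) ^ 2 = 0 :=
      (Measure.ae_ae_comm hmB).1 h1
    have h3 : ∀ᵐ z, ∀ᵐ s ∂(volume.restrict (Set.Ioo (0 : ℝ) 1)),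
        ∀ᵐ ξ ∂(volume.restrict (cube d)),
          W ((ξ, s), z) * (R' ((ξ, s), z) - R ((ξ, s), z)) ^ 2 = 0 := by
      filter_upwards [h2] with z hz
      rw [PM] at hz
      refine (Measure.ae_ae_comm ?_).1 (Measure.ae_ae_of_ae_prod hz)
      exact measurableSet_eq_fun ((mW.mul ((mR'.sub mR).pow_const 2)).comp
        (by fun_prop : Measurable fun p : (Fin d → ℝ) × ℝ => ((p.1, p.2), z))) measurable_const
    have h4 : ∀ᵐ s ∂(volume.restrict (Set.Ioo (0 : ℝ) 1)), ∀ᵐ z,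
        ∀ᵐ ξ ∂(volume.restrict (cube d)),
          W ((ξ, s), z) * (R' ((ξ, s), z) - R ((ξ, s), z)) ^ 2 = 0 := by
      refine (Measure.ae_ae_comm ?_).1 h3
      have hm : MeasurableSet {t : ((Fin d → ℝ) × ℝ) × (Fin d → ℝ) |
          W ((t.2, t.1.2), t.1.1) * (R' ((t.2, t.1.2), t.1.1) - R ((t.2, t.1.2), t.1.1)) ^ 2 = 0} :=
        measurableSet_eq_fun ((mW.mul ((mR'.sub mR).pow_const 2)).comp
          (by fun_prop : Measurable fun t : ((Fin d → ℝ) × ℝ) × (Fin d → ℝ) =>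
            ((t.2, t.1.2), t.1.1))) measurable_const
      have hm2 := measurable_measure_prodMk_left (ν := volume.restrict (cube d)) hm.compl
      exact hm2 (measurableSet_singleton 0)
    have h5 : ∀ᵐ s ∂(volume.restrict (Set.Ioo (0 : ℝ) 1)), s ∈ Set.Ioo (0 : ℝ) 1 :=
      ae_restrict_mem measurableSet_Ioo
    have hne : (volume.restrict (Set.Ioo (0 : ℝ) 1)) ≠ 0 := by
      rw [Ne, Measure.restrict_eq_zero]; simp
    have : (ae (volume.restrict (Set.Ioo (0 : ℝ) 1))).NeBot := ae_neBot.2 hne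
    obtain ⟨s, hs, hs'⟩ := (h4.and h5).exists
    refine ⟨s, hs', ?_⟩
    filter_upwards [hs] with z hz haz
    filter_upwards [hz] with ξ hξ
    have hWne : W ((ξ, s), z) ≠ 0 :=
      mul_ne_zero haz (hμm.trans_le (hμlb _ _ _)).ne'
    rcases mul_eq_zero.1 hξ with h | h
    · exact absurd h hWne
    · have := pow_eq_zero_iff (two_ne_zero) |>.1 h
      simp only [R, R'] at this
      linarith
  obtain ⟨s, hs, hsz⟩ := hgood
  obtain ⟨c, hc⟩ := ergodic a hameas hamass (fun ξ => ρ ξ s)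
    (hρmeas.comp (by fun_prop : Measurable fun ξ : Fin d → ℝ => (ξ, s))) (by
      filter_upwards [hsz] with z hz haz
      exact cube_ae _ (fun ξ k => by simp only [shiftc, hρper₁]) (hz haz))
  refine ⟨c, ?_⟩
  rw [← PM_eq, PM]
  refine (Measure.ae_prod_iff_ae_ae (measurableSet_eq_fun hρmeas measurable_const)).2 ?_
  filter_upwards [hconst, ae_restrict_of_ae hc] with ξ h1 h2
  filter_upwards [ae_restrict_mem measurableSet_Ioo] with t ht
  rw [h1 t (Set.Ioo_subset_Icc_self ht), ← h1 s (Set.Ioo_subset_Icc_self hs), h2]
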